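/- Let l < k < r be positive integers and p a prime. Let 𝔽_p = K_0 ⊆ K_1 ⊆ … ⊆ K_{k+r−l−2} be a chain of finite fields of characteristic p. Choose elements α_{i,j} for 1 ≤ i ≤ r−l and 1 ≤ j ≤ k such that α_{1,1} = 1, α_{i,j} ∈ K_0 = 𝔽_p when i+j = 2, and α_{i,j} ∈ K_{i+j−2} \ K_{i+j−3} when i+j ≥ 3. Define k vectors v^1, …, v^k ∈ K_{k+r−l−2}^r by v^j_i = δ_{i,j} for i ≤ l and v^j_i = α_{i−l,j} for i ≥ l+1. Then the r×k matrix (v^1,…,v^k) is an (r,k)-MDS code. -/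

import Mathlib

open Matrix

/-- A matrix `M` is an `(m, k)`-MDS code if any `k` of its rows are
linearly independent. -/
def IsMDS {K : Type*} [Field K] {ι ν : Type*} (k : ℕ) (M : Matrix ι ν K) : Prop :=
  ∀ A : Finset ι, A.card = k → LinearIndependent K fun i : {i // i ∈ A} => M i.1

/-!
Every square submatrix of `α` is nonsingular. Its entry in the lowest row and rightmost column lies
outside a subfield that contains all its other entries; expanding along that row, the determinant is
affine in this entry, with coefficients in the subfield and leading coefficient, up to sign, a
smaller minor, nonzero by induction. A vanishing determinant would put the entry in the subfield.
The rows of `M` are rows of the identity matrix stacked on `α`. In a linear relation between `k` of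
them, the coordinates missed by the chosen unit vectors give a nonsingular square system for the
coefficients of the rows of `α`, so these vanish and the remaining relation is between unit vectors.
-/

theorem det_mem {n R S : Type*} [Fintype n] [DecidableEq n] [CommRing R] [SetLike S R]
    [SubringClass S R] {s : S} {A : Matrix n n R} (hA : ∀ i j, A i j ∈ s) : A.det ∈ s := by
  rw [Matrix.det_apply']
  exact sum_mem fun σ _ => mul_mem (intCast_mem s _) (prod_mem fun i _ => hA _ _)

theorem det_notMem_of_unique_entry_notMem {L : Type*} [Field L] {F : Subfield L} {n : ℕ}
    {A : Matrix (Fin (n + 1)) (Fin (n + 1)) L} {p q : Fin (n + 1)}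
    (hmem : ∀ i j, i ≠ p ∨ j ≠ q → A i j ∈ F) (hpq : A p q ∉ F)
    (hminor : (A.submatrix p.succAbove q.succAbove).det ≠ 0) : A.det ∉ F := by
  intro hdet
  have hminor_mem (j : Fin (n + 1)) : (A.submatrix p.succAbove j.succAbove).det ∈ F :=
    det_mem fun _ _ => hmem _ _ (.inl (p.succAbove_ne _))
  have hsign (m : ℕ) : (-1 : L) ^ m ∈ F := pow_mem (neg_mem (one_mem F)) m
  rw [det_succ_row A p, ← Finset.add_sum_erase _ _ (Finset.mem_univ q)] at hdet
  have hrest : ∑ j ∈ Finset.univ.erase q,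
      (-1) ^ (p + j : ℕ) * A p j * (A.submatrix p.succAbove j.succAbove).det ∈ F :=
    sum_mem fun j hj => mul_mem
      (mul_mem (hsign _) (hmem _ _ (.inr (Finset.ne_of_mem_erase hj)))) (hminor_mem j)
  have hterm := (add_mem_cancel_right hrest).1 hdet
  have hentry := div_mem (div_mem hterm (hminor_mem q)) (hsign (p + q))
  rw [mul_div_cancel_right₀ _ hminor,
    mul_div_cancel_left₀ _ (pow_ne_zero _ (neg_ne_zero.2 one_ne_zero))] at hentry
  exact hpq hentry

/-- A matrix is superregular if all its square submatrices, of every order, are nonsingular; such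
matrices are exactly the parity parts of systematic MDS codes. Submatrices are given by injective
enumerations of their rows and columns, in any order, since reordering only affects the sign of
the determinant. -/
def IsSuperregular {ι κ R : Type*} [CommRing R] (A : Matrix ι κ R) : Prop :=
  ∀ ⦃n : ℕ⦄ ⦃f : Fin n → ι⦄ ⦃g : Fin n → κ⦄, f.Injective → g.Injective →
    (A.submatrix f g).det ≠ 0

theorem isSuperregular_of_notMem_subfield {ι κ L : Type*} [LinearOrder ι] [LinearOrder κ]
    [Field L] {A : Matrix ι κ L} (F : ι × κ → Subfield L) (hne : ∀ i j, A i j ≠ 0)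
    (hmem : ∀ ⦃x y : ι × κ⦄, x < y → A x.1 x.2 ∈ F y)
    (hnotMem : ∀ y : ι × κ, ¬ IsMin y → A y.1 y.2 ∉ F y) : IsSuperregular A := by
  intro n
  induction n with
  | zero => simp
  | succ n ih =>
    intro f g hf hg
    obtain ⟨p, hp⟩ := Finite.exists_max f
    obtain ⟨q, hq⟩ := Finite.exists_max g
    have hlt (i j) (hij : i ≠ p ∨ j ≠ q) : (f i, g j) < (f p, g q) :=
      Prod.mk_le_mk.2 ⟨hp i, hq j⟩ |>.lt_of_ne fun h => by
        obtain ⟨hfi, hgj⟩ := Prod.mk.inj h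
        exact hij.elim (· (hf hfi)) (· (hg hgj))
    by_cases hmin : IsMin (f p, g q)
    · have hcorner (i j) : i = p ∧ j = q := by
        by_contra hij
        exact hmin.not_lt (hlt i j (not_and_or.1 hij))
      have : Subsingleton (Fin (n + 1)) := ⟨fun i j => (hcorner i i).1.trans (hcorner j j).1.symm⟩
      rw [det_eq_elem_of_subsingleton _ p]
      exact hne _ _
    · have hdet : (A.submatrix f g).det ∉ F (f p, g q) :=
        det_notMem_of_unique_entry_notMem (fun i j hij => hmem (hlt i j hij)) (hnotMem _ hmin)
          (ih (hf.comp p.succAbove_right_injective) (hg.comp q.succAbove_right_injective))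
      exact ne_of_mem_of_not_mem (zero_mem _) hdet |>.symm

theorem IsSuperregular.eq_zero_of_sum_mul_eq_zero {ι κ R : Type*} [CommRing R] [IsDomain R]
    {A : Matrix ι κ R} (hA : IsSuperregular A) {s : Finset ι} {t : Finset κ}
    (hst : s.card = t.card) {c : ι → R} (hc : ∀ j ∈ t, ∑ i ∈ s, c i * A i j = 0) :
    ∀ i ∈ s, c i = 0 := by
  let f := s.equivFin.symm
  let g := (t.equivFinOfCardEq hst.symm).symm
  have hdet : (A.submatrix (fun x => (f x : ι)) (fun y => (g y : κ))).det ≠ 0 :=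
    hA (Subtype.val_injective.comp f.injective) (Subtype.val_injective.comp g.injective)
  have hcf : (fun x => c (f x)) = 0 := by
    refine eq_zero_of_vecMul_eq_zero hdet (funext fun y => ?_)
    calc ∑ x, c (f x) * A (f x) (g y) = ∑ i : s, c i * A i (g y) :=
          f.sum_comp fun i : s => c i * A i (g y)
      _ = ∑ i ∈ s, c i * A i (g y) := s.sum_coe_sort fun i => c i * A i (g y)
      _ = 0 := hc _ (g y).2
  intro i hi
  simpa only [f.apply_symm_apply, Pi.zero_apply] using congrFun hcf (f.symm ⟨i, hi⟩)

theorem IsSuperregular.isMDS_fromRows_one {ι κ K : Type*} [Fintype κ] [DecidableEq κ] [Field K]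
    {A : Matrix ι κ K} (hA : IsSuperregular A) :
    IsMDS (Fintype.card κ) (fromRows (1 : Matrix κ κ K) A) := by
  intro S hS
  suffices h : LinearIndepOn K (fun i => fromRows (1 : Matrix κ κ K) A i) (S : Set (κ ⊕ ι)) from h
  rw [linearIndepOn_finset_iff]
  intro c hc
  have hcoord (j : κ) : (if j ∈ S.toLeft then c (.inl j) else 0) +
      ∑ i ∈ S.toRight, c (.inr i) * A i j = 0 := by
    simpa [Finset.sum_sum_eq_sum_toLeft_add_sum_toRight, Matrix.one_apply] using congrFun hc j
  have hcard : S.toRight.card = S.toLeftᶜ.card := by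
    rw [Finset.card_compl, ← hS, ← S.card_toLeft_add_card_toRight, Nat.add_sub_cancel_left]
  have hright : ∀ i ∈ S.toRight, c (.inr i) = 0 :=
    hA.eq_zero_of_sum_mul_eq_zero hcard fun j hj => by
      simpa only [if_neg (Finset.mem_compl.1 hj), zero_add] using hcoord j
  rintro (j | i) hi
  · have hj : j ∈ S.toLeft := Finset.mem_toLeft.2 hi
    have hsum : ∑ i ∈ S.toRight, c (.inr i) * A i j = 0 :=
      Finset.sum_eq_zero fun i hi => by rw [hright i hi, zero_mul]
    simpa only [if_pos hj, hsum, add_zero] using hcoord j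
  · exact hright i (Finset.mem_toRight.2 hi)

theorem IsMDS.submatrix_id {ι ι' κ K : Type*} [Field K] {k : ℕ} {M : Matrix ι κ K}
    (hM : IsMDS k M) {e : ι' → ι} (he : e.Injective) : IsMDS k (M.submatrix e id) := by
  intro S hS
  let e' (i : S) : S.map ⟨e, he⟩ := ⟨e i, Finset.mem_map_of_mem ⟨e, he⟩ i.2⟩
  have he' : e'.Injective := fun i j hij => Subtype.ext (he (congrArg Subtype.val hij))
  exact (hM (S.map ⟨e, he⟩) ((Finset.card_map _).trans hS)).comp e' he'

/-- The position of row `i` of the code matrix in `fromRows 1 α`: the first `l` rows are rows of the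
identity matrix, the others are rows of `α`. -/
def stackedRow {l k r : ℕ} (hlk : l ≤ k) (i : Fin r) : Fin k ⊕ Fin (r - l) :=
  if h : (i : ℕ) < l then .inl ⟨i, h.trans_le hlk⟩ else .inr ⟨i - l, by omega⟩

theorem stackedRow_injective {l k r : ℕ} (hlk : l ≤ k) :
    (stackedRow hlk : Fin r → Fin k ⊕ Fin (r - l)).Injective := by
  intro i j hij
  unfold stackedRow at hij
  split_ifs at hij <;> simp only [Sum.inl.injEq, Sum.inr.injEq, Fin.mk.injEq] at hij <;> omega

theorem isSuperregular_of_notMem_chain {m n N : ℕ} {L : Type*} [Field L]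
    {Ks : Fin N → Subfield L} (hmono : Monotone Ks) {α : Matrix (Fin m) (Fin n) L}
    (hN : ∀ (i : Fin m) (j : Fin n), (i : ℕ) + j < N)
    (hne : ∀ (i : Fin m) (j : Fin n), (i : ℕ) + j = 0 → α i j ≠ 0)
    (hmem : ∀ (i : Fin m) (j : Fin n), α i j ∈ Ks ⟨i + j, hN i j⟩)
    (hnotMem : ∀ (i : Fin m) (j : Fin n), 1 ≤ (i : ℕ) + j →
      α i j ∉ Ks ⟨i + j - 1, (Nat.sub_le _ _).trans_lt (hN i j)⟩) :
    IsSuperregular α := by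
  refine isSuperregular_of_notMem_subfield
    (fun x => Ks ⟨x.1 + x.2 - 1, (Nat.sub_le _ _).trans_lt (hN x.1 x.2)⟩) ?_ ?_ ?_
  · intro i j
    obtain hij | hij := Nat.eq_zero_or_pos ((i : ℕ) + j)
    · exact hne i j hij
    · exact (ne_of_mem_of_not_mem (zero_mem _) (hnotMem i j hij)).symm
  · rintro ⟨i, j⟩ ⟨i', j'⟩ hlt
    refine hmono ?_ (hmem i j)
    rw [Prod.mk_lt_mk] at hlt
    simp only [Fin.mk_le_mk]
    omega
  · rintro ⟨i, j⟩ hmin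
    refine hnotMem i j (Nat.one_le_iff_ne_zero.2 fun hij => hmin fun x _ => ?_)
    simp only [Prod.le_def, Fin.le_def]
    omega

theorem stmt13_general {l k r : ℕ} (hlk : l ≤ k) {L : Type*} [Field L]
    (Ks : Fin (k + r - l - 2 + 1) → Subfield L) (hmono : Monotone Ks)
    (α : Fin (r - l) → Fin k → L)
    (hne : ∀ (i : Fin (r - l)) (j : Fin k), (i : ℕ) = 0 → (j : ℕ) = 0 → α i j ≠ 0)
    (hα0 : ∀ (i : Fin (r - l)) (j : Fin k), (i : ℕ) + (j : ℕ) = 0 → α i j ∈ Ks 0)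
    (hα : ∀ (i : Fin (r - l)) (j : Fin k), 1 ≤ (i : ℕ) + (j : ℕ) →
        α i j ∈ Ks ⟨(i : ℕ) + (j : ℕ), by omega⟩ ∧
        α i j ∉ Ks ⟨(i : ℕ) + (j : ℕ) - 1, by omega⟩)
    (M : Matrix (Fin r) (Fin k) L)
    (hM1 : ∀ (i : Fin r) (j : Fin k), (i : ℕ) < l →
        M i j = if (i : ℕ) = (j : ℕ) then 1 else 0)
    (hM2 : ∀ (i : Fin r) (j : Fin k) (h : l ≤ (i : ℕ)), M i j = α ⟨(i : ℕ) - l, by omega⟩ j) :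
    IsMDS k M := by
  have hmem (i : Fin (r - l)) (j : Fin k) : α i j ∈ Ks ⟨i + j, by omega⟩ := by
    obtain hij | hij := Nat.eq_zero_or_pos ((i : ℕ) + j)
    · simpa only [hij] using! hα0 i j hij
    · exact (hα i j hij).1
  have hα_superregular : IsSuperregular (of α) :=
    isSuperregular_of_notMem_chain hmono (fun i j => by omega)
      (fun i j hij => hne i j (by omega) (by omega)) hmem fun i j hij => (hα i j hij).2
  have hM : M = (fromRows 1 (of α)).submatrix (stackedRow hlk) id := by
    ext i j
    by_cases hi : (i : ℕ) < l
    · simp [stackedRow, hi, hM1 i j hi, Matrix.one_apply, Fin.ext_iff]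
    · simp [stackedRow, hi, hM2 i j (not_lt.1 hi)]
  have hMDS : IsMDS k (fromRows (1 : Matrix (Fin k) (Fin k) L) (of α)) := by
    simpa only [Fintype.card_fin] using hα_superregular.isMDS_fromRows_one
  exact hM ▸ hMDS.submatrix_id (stackedRow_injective hlk)

/-- let `l < k < r` be positive integers, `p` prime, and
`𝔽_p = K_0 ⊆ K_1 ⊆ … ⊆ K_{k+r−l−2}` a chain of finite fields of characteristic
`p`. Choose `α_{i,j}` (for `1 ≤ i ≤ r−l`, `1 ≤ j ≤ k`) with `α_{1,1} = 1`,
`α_{i,j} ∈ K_0` when `i+j = 2`, and `α_{i,j} ∈ K_{i+j−2} \ K_{i+j−3}` when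
`i+j ≥ 3`. Then the `r×k` matrix `(v^1,…,v^k)` with `v^j_i = δ_{i,j}` for `i ≤ l`
and `v^j_i = α_{i−l,j}` for `i ≥ l+1` is an `(r,k)`-MDS code.
(Here `α` is indexed `0`-based: `α i j` corresponds to `α_{i+1,j+1}`.) -/
theorem stmt13 {p l k r : ℕ} (hp : p.Prime) (hl : 0 < l) (hlk : l < k) (hkr : k < r)
    {L : Type*} [Field L] [Fintype L] [CharP L p]
    (Ks : Fin (k + r - l - 2 + 1) → Subfield L) (hmono : Monotone Ks)
    (hbot : Ks 0 = ⊥) (htop : Ks (Fin.last _) = ⊤)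
    (α : Fin (r - l) → Fin k → L)
    (hα1 : ∀ (i : Fin (r - l)) (j : Fin k), (i : ℕ) = 0 → (j : ℕ) = 0 → α i j = 1)
    (hα0 : ∀ (i : Fin (r - l)) (j : Fin k), (i : ℕ) + (j : ℕ) = 0 → α i j ∈ Ks 0)
    (hα : ∀ (i : Fin (r - l)) (j : Fin k), 1 ≤ (i : ℕ) + (j : ℕ) →
        α i j ∈ Ks ⟨(i : ℕ) + (j : ℕ), by have := i.isLt; have := j.isLt; omega⟩ ∧
        α i j ∉ Ks ⟨(i : ℕ) + (j : ℕ) - 1, by have := i.isLt; have := j.isLt; omega⟩)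
    (M : Matrix (Fin r) (Fin k) L)
    (hM1 : ∀ (i : Fin r) (j : Fin k), (i : ℕ) < l →
        M i j = if (i : ℕ) = (j : ℕ) then 1 else 0)
    (hM2 : ∀ (i : Fin r) (j : Fin k) (h : l ≤ (i : ℕ)),
        M i j = α ⟨(i : ℕ) - l, by have := i.isLt; omega⟩ j) :
    IsMDS k M := by
  exact stmt13_general hlk.le Ks hmono α
    (fun i j hi hj => (hα1 i j hi hj).trans_ne one_ne_zero) hα0 hα M hM1 hM2
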